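/- arXiv:1705.07939 — 2 statements merged into one kernel-verified Lean document; each statement's English description precedes it below -/
import Mathlib

section
/- Let a, b, c be complex numbers such that (a+b+1)/2 is not a nonpositive integer, 2c−1 is not a nonpositive integer, and Re(2c − a − b) > 2. Then ₃F₂(a, b, c; (a+b+1)/2, 2c−1; 1) = ₃F₂(a, b, c; (a+b+1)/2, 2c; 1) + (ab/((2c−1)(a+b+1))) · ₃F₂(a+1, b+1, c+1; (a+b+3)/2, 2c+1; 1). -/
open scoped Nat

/-- The generalized hypergeometric series `₃F₂(a, b, c; d, e; 1)`, defined as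
`∑ₙ (a)ₙ(b)ₙ(c)ₙ / ((d)ₙ(e)ₙ n!)` where `(α)ₙ` is the Pochhammer symbol. -/
noncomputable def hyp3F2 (a b c d e : ℂ) : ℂ :=
  ∑' n : ℕ,
    ((ascPochhammer ℂ n).eval a * (ascPochhammer ℂ n).eval b * (ascPochhammer ℂ n).eval c) /
      ((ascPochhammer ℂ n).eval d * (ascPochhammer ℂ n).eval e * (n ! : ℂ))

open Filter Asymptotics Topology in
theorem poch_isBigO (a : ℂ) :
    (fun n : ℕ => (ascPochhammer ℂ (n + 1)).eval a) =O[atTop]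
      (fun n : ℕ => (n : ℝ) ^ a.re * (n ! : ℝ)) := by
  have hprod : ∀ n : ℕ, (ascPochhammer ℂ n).eval a = ∏ j ∈ Finset.range n, (a + j) := by
    intro n
    induction n with
    | zero => simp
    | succ k ih => rw [ascPochhammer_succ_eval, Finset.prod_range_succ, ih]
  by_cases h : ∃ m : ℕ, a = -(m : ℂ)
  · obtain ⟨m, hm⟩ := h
    have : (fun n : ℕ => (ascPochhammer ℂ (n + 1)).eval a) =ᶠ[atTop] fun _ => (0 : ℂ) := by
      filter_upwards [eventually_ge_atTop m] with n hn
      rw [hprod]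
      apply Finset.prod_eq_zero (i := m)
      · simp; omega
      · rw [hm]; ring
    exact this.trans_isBigO (isBigO_zero _ _)
  · push Not at h
    have hG := Complex.GammaSeq_tendsto_Gamma a
    have hG' := (hG.inv₀ (Complex.Gamma_ne_zero h)).isBigO_one ℝ
    have h2 : (fun n : ℕ => (n : ℂ) ^ a * (n ! : ℂ)) =O[atTop]
      (fun n : ℕ => (n : ℝ) ^ a.re * (n ! : ℝ)) := by
      apply IsBigO.of_bound 1
      filter_upwards [eventually_gt_atTop 0] with n hn
      rw [norm_mul, Complex.norm_natCast_cpow_of_pos hn, one_mul, Complex.norm_natCast]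
      exact le_abs_self _
    have h3 := h2.mul hG'
    simp only [mul_one] at h3
    refine h3.congr' ?_ (EventuallyEq.refl _ _)
    filter_upwards [eventually_gt_atTop 0] with n hn
    have h0 : (n : ℂ) ^ a ≠ 0 := by
      rw [Complex.cpow_ne_zero_iff]
      left; exact_mod_cast hn.ne'
    have h1 : (n ! : ℂ) ≠ 0 := by exact_mod_cast n.factorial_ne_zero
    rw [Complex.GammaSeq, hprod, inv_div]
    field_simp

open Filter Asymptotics Topology in
theorem poch_inv_isBigO (a : ℂ) :
    (fun n : ℕ => ((ascPochhammer ℂ (n + 1)).eval a)⁻¹) =O[atTop]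
      (fun n : ℕ => (n : ℝ) ^ (-a.re) * (n ! : ℝ)⁻¹) := by
  have hprod : ∀ n : ℕ, (ascPochhammer ℂ n).eval a = ∏ j ∈ Finset.range n, (a + j) := by
    intro n
    induction n with
    | zero => simp
    | succ k ih => rw [ascPochhammer_succ_eval, Finset.prod_range_succ, ih]
  have hG' := (Complex.GammaSeq_tendsto_Gamma a).isBigO_one ℝ
  have h2 : (fun n : ℕ => ((n : ℂ) ^ a * (n ! : ℂ))⁻¹) =O[atTop]
      (fun n : ℕ => (n : ℝ) ^ (-a.re) * (n ! : ℝ)⁻¹) := by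
    apply IsBigO.of_bound 1
    filter_upwards [eventually_gt_atTop 0] with n hn
    rw [norm_inv, norm_mul, Complex.norm_natCast_cpow_of_pos hn, one_mul, Complex.norm_natCast,
      Real.rpow_neg (Nat.cast_nonneg n), mul_inv]
    exact le_abs_self _
  have h3 := h2.mul hG'
  simp only [mul_one] at h3
  refine h3.congr' ?_ (EventuallyEq.refl _ _)
  filter_upwards [eventually_gt_atTop 0] with n hn
  have h0 : (n : ℂ) ^ a ≠ 0 := by
    rw [Complex.cpow_ne_zero_iff]
    left; exact_mod_cast hn.ne'
  have h1 : (n ! : ℂ) ≠ 0 := by exact_mod_cast n.factorial_ne_zero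
  rw [Complex.GammaSeq, hprod, div_eq_mul_inv, ← mul_assoc, inv_mul_cancel₀ (mul_ne_zero h0 h1),
    one_mul]

open Filter Asymptotics Topology in
theorem summable_hyp3F2 (a b c d e : ℂ) (h : 0 < (d + e - a - b - c).re) :
    Summable (fun n : ℕ =>
    ((ascPochhammer ℂ n).eval a * (ascPochhammer ℂ n).eval b * (ascPochhammer ℂ n).eval c) /
      ((ascPochhammer ℂ n).eval d * (ascPochhammer ℂ n).eval e * (n ! : ℂ))) := by
  rw [← summable_nat_add_iff 1]
  have hf := poch_inv_isBigO 1
  have hB := ((((poch_isBigO a).mul (poch_isBigO b)).mul (poch_isBigO c)).mul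
    (((poch_inv_isBigO d).mul (poch_inv_isBigO e)).mul hf))
  have hs : Summable (fun n : ℕ => (n : ℝ) ^ (-(d + e - a - b - c).re - 1)) :=
    Real.summable_nat_rpow.mpr (by linarith)
  refine summable_of_isBigO_nat hs (hB.congr' ?_ ?_)
  · filter_upwards with n
    rw [ascPochhammer_eval_one, div_eq_mul_inv, mul_inv, mul_inv]
  · filter_upwards [eventually_gt_atTop 0] with n hn
    have hn' : (0 : ℝ) < n := by exact_mod_cast hn
    have h1 : (n ! : ℝ) ≠ 0 := by exact_mod_cast n.factorial_ne_zero
    have : -(d + e - a - b - c).re - 1 =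
      a.re + b.re + c.re + (-d.re + -e.re + -(1 : ℂ).re) := by
      simp; ring
    rw [this, Real.rpow_add hn', Real.rpow_add hn', Real.rpow_add hn', Real.rpow_add hn',
      Real.rpow_add hn']
    field_simp

theorem watson_contiguous_15 (a b c : ℂ)
    (hd : ∀ m : ℕ, (a + b + 1) / 2 ≠ -(m : ℂ))
    (he : ∀ m : ℕ, 2 * c - 1 ≠ -(m : ℂ))
    (hre : (2 * c - a - b).re > 2) :
    hyp3F2 a b c ((a + b + 1) / 2) (2 * c - 1) =
      hyp3F2 a b c ((a + b + 1) / 2) (2 * c) +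
        a * b / ((2 * c - 1) * (a + b + 1)) *
          hyp3F2 (a + 1) (b + 1) (c + 1) ((a + b + 3) / 2) (2 * c + 1) := by
  have hpne : ∀ x : ℂ, (∀ m : ℕ, x ≠ -(m : ℂ)) → ∀ n, (ascPochhammer ℂ n).eval x ≠ 0 := by
    intro x hx n
    induction n with
    | zero => simp
    | succ k ih =>
      rw [ascPochhammer_succ_eval]
      exact mul_ne_zero ih fun h => hx k (eq_neg_of_add_eq_zero_left h)
  have hleft : ∀ (x : ℂ) (n : ℕ), (ascPochhammer ℂ (n + 1)).eval x =
      x * (ascPochhammer ℂ n).eval (x + 1) := by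
    intro x n
    simp [ascPochhammer_succ_left]
  have hre' : 2 * c.re - a.re - b.re > 2 := by simpa using hre
  have e1 : (a + b + 3) / 2 = (a + b + 1) / 2 + 1 := by ring
  have hdre : ((a + b + 1) / 2).re = (a.re + b.re + 1) / 2 := by simp
  have S2 := summable_hyp3F2 a b c ((a + b + 1) / 2) (2 * c) (by
    simp only [Complex.sub_re, Complex.add_re, hdre]; simp; linarith)
  have S1 := summable_hyp3F2 a b c ((a + b + 1) / 2) (2 * c - 1) (by
    simp only [Complex.sub_re, Complex.add_re, hdre]; simp; linarith)
  rw [e1]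
  unfold hyp3F2
  rw [← sub_eq_iff_eq_add', ← S1.tsum_sub S2, (S1.sub S2).tsum_eq_zero_add, ← tsum_mul_left]
  simp only [ascPochhammer_zero, Polynomial.eval_one, sub_self, zero_add]
  congr 1
  ext n
  have he1 : ∀ m : ℕ, 2 * c ≠ -(m : ℂ) := fun m h => he (m + 1) (by rw [h]; push_cast; ring)
  have he2 : ∀ m : ℕ, 2 * c + 1 ≠ -(m : ℂ) := fun m h => he1 (m + 1) (by
    rw [eq_sub_of_add_eq h]; push_cast; ring)
  have hd1 : ∀ m : ℕ, (a + b + 1) / 2 + 1 ≠ -(m : ℂ) := fun m h => hd (m + 1) (by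
    rw [eq_sub_of_add_eq h]; push_cast; ring)
  have c0 : c ≠ 0 := fun h => he1 0 (by simp [h])
  have q0 : 2 * c - 1 ≠ 0 := by simpa using he 0
  have d0 : a + b + 1 ≠ 0 := fun h => hd 0 (by simp [h])
  have n1 := hpne _ he1 n
  have n2 := hpne _ he2 n
  have n3 := hpne _ hd1 n
  have k := ascPochhammer_succ_eval n (2 * c)
  rw [hleft (2 * c) n] at k
  have kn : 2 * c + n ≠ 0 := fun h => he1 n (eq_neg_of_add_eq_zero_left h)
  have nn : (n : ℂ) + 1 ≠ 0 := by exact_mod_cast n.succ_ne_zero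
  have nf : (n ! : ℂ) ≠ 0 := by exact_mod_cast n.factorial_ne_zero
  rw [hleft a, hleft b, hleft c, hleft ((a + b + 1) / 2), hleft (2 * c), hleft (2 * c - 1),
    sub_add_cancel, Nat.factorial_succ]
  have k' : (ascPochhammer ℂ n).eval (2 * c) =
      2 * c * (ascPochhammer ℂ n).eval (2 * c + 1) / (2 * c + n) := by
    rw [eq_div_iff kn, k]
  rw [k']
  generalize (ascPochhammer ℂ n).eval (2 * c + 1) = E at *
  generalize (ascPochhammer ℂ n).eval ((a + b + 1) / 2 + 1) = D at *
  push_cast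
  generalize (ascPochhammer ℂ n).eval (a + 1) = A at *
  generalize (ascPochhammer ℂ n).eval (b + 1) = B at *
  generalize (ascPochhammer ℂ n).eval (c + 1) = C at *
  generalize hq : 2 * c - 1 = q at *
  field_simp
  linear_combination (a * b * A * B * C) * hq
end

section
/- Let a, b, c be complex numbers such that (a+b+3)/2 is not a nonpositive integer, 2c−1 is not a nonpositive integer, and Re(2c − a − b) > 0. Then ₃F₂(a, b, c; (a+b+3)/2, 2c−1; 1) = ₃F₂(a, b, c; (a+b+3)/2, 2c; 1) + (ab/((2c−1)(a+b+3))) · ₃F₂(a+1, b+1, c+1; (a+b+5)/2, 2c+1; 1). -/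
open scoped Nat

lemma poch_prod (s : ℂ) (n : ℕ) :
    (ascPochhammer ℂ n).eval s = ∏ j ∈ Finset.range n, (s + j) := by
  induction n with
  | zero => simp
  | succ n ih => rw [ascPochhammer_succ_eval, ih, Finset.prod_range_succ]

lemma poch_left (s : ℂ) (n : ℕ) :
    (ascPochhammer ℂ (n + 1)).eval s = s * (ascPochhammer ℂ n).eval (s + 1) := by
  rw [poch_prod, poch_prod, Finset.prod_range_succ']
  simp only [Nat.cast_zero, add_zero, Nat.cast_add, Nat.cast_one]
  rw [mul_comm]
  congr 1
  exact Finset.prod_congr rfl fun j _ => by ring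

lemma poch_ne (s : ℂ) (h : ∀ m : ℕ, s ≠ -(m : ℂ)) (n : ℕ) :
    (ascPochhammer ℂ n).eval s ≠ 0 := by
  rw [poch_prod, Finset.prod_ne_zero_iff]
  intro j _ h0
  exact h j (eq_neg_of_add_eq_zero_left h0)

lemma gs_eq (s : ℂ) (n : ℕ) :
    Complex.GammaSeq s n = (n : ℂ) ^ s * n ! / (ascPochhammer ℂ (n + 1)).eval s := by
  rw [poch_prod]; rfl

lemma poch_inv_bigO (s : ℂ) :
    (fun n : ℕ => ((ascPochhammer ℂ (n + 1)).eval s)⁻¹) =O[Filter.atTop]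
      fun n : ℕ => ((n : ℝ) ^ s.re * n !)⁻¹ := by
  have h1 := (Complex.GammaSeq_tendsto_Gamma s).isBigO_one ℝ
  have h2 : (fun n : ℕ => ((n : ℂ) ^ s * n !)⁻¹) =O[Filter.atTop]
      fun n : ℕ => ((n : ℝ) ^ s.re * n !)⁻¹ := by
    refine Asymptotics.IsBigO.of_bound 1 ?_
    filter_upwards [Filter.eventually_gt_atTop 0] with n hn
    simp [Complex.norm_natCast_cpow_of_pos hn, abs_of_nonneg (Real.rpow_nonneg (Nat.cast_nonneg n) _)]
  refine (Asymptotics.IsBigO.congr' (h1.mul h2) ?_ ?_)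
  · filter_upwards [Filter.eventually_gt_atTop 0] with n hn
    have : (n : ℂ) ^ s * n ! ≠ 0 := by
      have hn' : (n : ℂ) ≠ 0 := by exact_mod_cast hn.ne'
      have := n.factorial_ne_zero
      simp [Complex.cpow_eq_zero_iff, hn', this]
    rw [gs_eq]
    generalize (n : ℂ) ^ s * n ! = X at *
    rw [div_eq_mul_inv, mul_right_comm, mul_inv_cancel₀ this, one_mul]
  · filter_upwards with n
    simp

lemma poch_bigO (s : ℂ) :
    (fun n : ℕ => ((ascPochhammer ℂ (n + 1)).eval s)) =O[Filter.atTop]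
      fun n : ℕ => ((n : ℝ) ^ s.re * n !) := by
  by_cases hs : ∀ m : ℕ, s ≠ -(m : ℂ)
  · have h1 := ((Complex.GammaSeq_tendsto_Gamma s).inv₀ (Complex.Gamma_ne_zero hs)).isBigO_one ℝ
    have h2 : (fun n : ℕ => ((n : ℂ) ^ s * n !)) =O[Filter.atTop]
        fun n : ℕ => ((n : ℝ) ^ s.re * n !) := by
      refine Asymptotics.IsBigO.of_bound 1 ?_
      filter_upwards [Filter.eventually_gt_atTop 0] with n hn
      simp [Complex.norm_natCast_cpow_of_pos hn, abs_of_nonneg (Real.rpow_nonneg (Nat.cast_nonneg n) _)]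
    refine (Asymptotics.IsBigO.congr' (h1.mul h2) ?_ ?_)
    · filter_upwards [Filter.eventually_gt_atTop 0] with n hn
      have : (n : ℂ) ^ s * n ! ≠ 0 := by
        have hn' : (n : ℂ) ≠ 0 := by exact_mod_cast hn.ne'
        have := n.factorial_ne_zero
        simp [Complex.cpow_eq_zero_iff, hn', this]
      rw [gs_eq]
      generalize (n : ℂ) ^ s * n ! = X at *
      rw [inv_div, div_mul_cancel₀ _ this]
    · filter_upwards with n
      simp
  · push Not at hs
    obtain ⟨m, hm⟩ := hs
    refine Asymptotics.IsBigO.of_bound 1 ?_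
    filter_upwards [Filter.eventually_ge_atTop m] with n hn
    have : (ascPochhammer ℂ (n + 1)).eval s = 0 := by
      rw [poch_prod]
      exact Finset.prod_eq_zero (i := m) (by simp; omega) (by simp [hm])
    rw [this, norm_zero]; positivity

lemma term_summable (a b c d e : ℂ) (h : 0 < (d + e - a - b - c).re) :
    Summable fun n : ℕ =>
    ((ascPochhammer ℂ n).eval a * (ascPochhammer ℂ n).eval b * (ascPochhammer ℂ n).eval c) /
      ((ascPochhammer ℂ n).eval d * (ascPochhammer ℂ n).eval e * (n ! : ℂ)) := by
  rw [← summable_nat_add_iff 1]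
  have h3 : (fun n : ℕ => (((n + 1)! : ℕ) : ℂ)⁻¹) =O[Filter.atTop]
      fun n : ℕ => ((n : ℝ) * n !)⁻¹ := by
    refine Asymptotics.IsBigO.of_bound 1 ?_
    filter_upwards [Filter.eventually_gt_atTop 0] with n hn
    have hn' : (0 : ℝ) < n := by exact_mod_cast hn
    have hf : (0 : ℝ) < n ! := by exact_mod_cast n.factorial_pos
    rw [one_mul, norm_inv, norm_inv, Complex.norm_natCast, Real.norm_of_nonneg (by positivity),
      Nat.factorial_succ]
    push_cast
    gcongr
    linarith
  have hB := (((poch_bigO a).mul (poch_bigO b)).mul (poch_bigO c)).mul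
    (((poch_inv_bigO d).mul (poch_inv_bigO e)).mul h3)
  have hS : Summable fun n : ℕ => (n : ℝ) ^ (-(d + e - a - b - c).re - 1) :=
    Real.summable_nat_rpow.2 (by linarith)
  refine summable_of_isBigO_nat hS (hB.congr' ?_ ?_)
  · filter_upwards with n
    rw [div_eq_mul_inv, mul_inv, mul_inv]
  · filter_upwards [Filter.eventually_gt_atTop 0] with n hn
    have hn' : (0 : ℝ) < n := by exact_mod_cast hn
    have hf : (0 : ℝ) < n ! := by exact_mod_cast n.factorial_pos
    have : -(d + e - a - b - c).re - 1 = a.re + b.re + c.re - d.re - e.re - 1 := by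
      simp; ring
    rw [this, Real.rpow_sub hn', Real.rpow_sub hn', Real.rpow_sub hn', Real.rpow_add hn',
      Real.rpow_add hn', Real.rpow_one]
    field_simp

theorem watson_contiguous_17 (a b c : ℂ)
    (hd : ∀ m : ℕ, (a + b + 3) / 2 ≠ -(m : ℂ))
    (he : ∀ m : ℕ, 2 * c - 1 ≠ -(m : ℂ))
    (hre : (2 * c - a - b).re > 0) :
    hyp3F2 a b c ((a + b + 3) / 2) (2 * c - 1) =
      hyp3F2 a b c ((a + b + 3) / 2) (2 * c) +
        a * b / ((2 * c - 1) * (a + b + 3)) *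
          hyp3F2 (a + 1) (b + 1) (c + 1) ((a + b + 5) / 2) (2 * c + 1) := by
  have hre' : 0 < 2 * c.re - a.re - b.re := by simpa using hre
  have half : ∀ z : ℂ, (z / 2).re = z.re / 2 := fun z => by
    simpa using Complex.div_natCast_re z 2
  have s1 := term_summable a b c ((a + b + 3) / 2) (2 * c - 1) (by
    simp [half]; linarith)
  have s2 := term_summable a b c ((a + b + 3) / 2) (2 * c) (by
    simp [half]; linarith)
  have hd5 : (a + b + 5) / 2 = (a + b + 3) / 2 + 1 := by ring
  have hd3 : a + b + 3 = 2 * ((a + b + 3) / 2) := by ring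
  have h0 := he 0
  have h1 := he 1
  unfold hyp3F2
  rw [hd5, hd3, ← hd3]
  rw [← sub_eq_iff_eq_add', ← s1.tsum_sub s2, (s1.sub s2).tsum_eq_zero_add, ← tsum_mul_left]
  simp only [ascPochhammer_zero, Polynomial.eval_one, sub_self, zero_add]
  refine tsum_congr fun n => ?_
  have hc0 : 2 * c ≠ 0 := fun h => h1 (by rw [h]; simp)
  have hd1 : ∀ m : ℕ, (a + b + 3) / 2 + 1 ≠ -(m : ℂ) := fun m h =>
    hd (m + 1) (by push_cast; linear_combination h)
  have he2 : ∀ m : ℕ, 2 * c + 1 ≠ -(m : ℂ) := fun m h =>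
    he (m + 2) (by push_cast; linear_combination h)
  have e1 : (ascPochhammer ℂ (n + 1)).eval (2 * c) =
      2 * c * (ascPochhammer ℂ n).eval (2 * c + 1) := poch_left _ _
  have e2 : (ascPochhammer ℂ (n + 1)).eval (2 * c - 1) * (2 * c + n) =
      (2 * c - 1) * (2 * c * (ascPochhammer ℂ n).eval (2 * c + 1)) := by
    have e4 := poch_left (2 * c - 1) (n + 1)
    rw [sub_add_cancel, ascPochhammer_succ_eval (n + 1)] at e4
    rw [← e1, ← e4]
    push_cast; ring
  have hP := poch_ne _ he (n + 1)
  have hQ := poch_ne _ he2 n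
  have hD := poch_ne _ hd1 n
  have hdd := hd 0
  have hen : 2 * c + n ≠ 0 := fun h => he (n + 1) (by push_cast; linear_combination h)
  have e3 := eq_div_of_mul_eq hen e2
  have hf : (n ! : ℂ) ≠ 0 := by exact_mod_cast n.factorial_ne_zero
  have hn1 : (n + 1 : ℂ) ≠ 0 := by exact_mod_cast n.succ_ne_zero
  rw [e3, e1, poch_left a, poch_left b, poch_left c, poch_left ((a + b + 3) / 2),
    Nat.factorial_succ]
  have hd3' : a + b + 3 ≠ 0 := fun h => hdd (by rw [h]; simp)
  have hc : c ≠ 0 := fun h => hc0 (by rw [h]; simp)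
  simp only [Nat.cast_zero, neg_zero] at h0 hdd
  push_cast
  generalize (ascPochhammer ℂ n).eval (2 * c + 1) = Q at *
  generalize (ascPochhammer ℂ n).eval ((a + b + 3) / 2 + 1) = D at *
  generalize (ascPochhammer ℂ n).eval (a + 1) = A at *
  generalize (ascPochhammer ℂ n).eval (b + 1) = B at *
  generalize (ascPochhammer ℂ n).eval (c + 1) = C at *
  clear e1 e2 e3 hP
  obtain ⟨E, hE⟩ : ∃ E, E = 2 * c - 1 := ⟨_, rfl⟩
  obtain ⟨N, hN⟩ : ∃ N, N = 2 * c + n := ⟨_, rfl⟩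
  rw [← hE] at h0 ⊢
  rw [← hN] at hen ⊢
  field_simp
  rw [hE, hN]
  ring
end
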